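/- Let U : ℝ² → ℝ be a smooth, nowhere-vanishing function of (z,τ) satisfying the RmKdV equation U_τ + (U³(U_zz − U))_z = 0, let k = 1 or k = −1, and suppose U + k·U_z is nowhere vanishing. Let y : ℝ² → ℝ be smooth with y_z = U + k·U_z and y_τ = (U⁴ − U³·U_zz) + k·(U⁴ − U³·U_zz)_z on ℝ², and let M : ℝ² → ℝ be a smooth function of (y,T) such that M(y(z,τ), τ) = U(z,τ)·(U(z,τ) + k·U_z(z,τ)) for all (z,τ). Then the RKdV equation M_T + (M³(M_yy − 1))_y = 0 holds at every point of the form (y(z,τ), τ). -/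

import Mathlib

noncomputable section

/-- Partial derivative of `f` with respect to its first argument. -/
def d1 (f : ℝ → ℝ → ℝ) : ℝ → ℝ → ℝ := fun a b => deriv (fun a' => f a' b) a

/-- Partial derivative of `f` with respect to its second argument. -/
def d2 (f : ℝ → ℝ → ℝ) : ℝ → ℝ → ℝ := fun a b => deriv (fun b' => f a b') b

/-- Smoothness of a two-variable real function. -/
def Smooth2 (f : ℝ → ℝ → ℝ) : Prop := ContDiff ℝ (⊤ : ℕ∞) (fun p : ℝ × ℝ => f p.1 p.2)

/-!
Write `D` for `∂_z`, `s = U - U_zz`, `A = U³s`, `w = U + kU_z` and `m = Uw`, so that RmKdV is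
`U_τ = A_z` while `y_z = w` and `y_τ = A + kA_z`. As `k² = 1`, the factorization
`1 - D² = (1 - kD)(1 + kD)` gives `kw_z = w - s` and hence `k m_z = w² - Us`. These relations turn
the pulled back RKdV flux `m³(1 - M_yy)`, a priori rational in `w`, into the differential polynomial
`mA + k(mA_z - Am_z)`. Pulled back and multiplied by `y_z`, RKdV then becomes
`A_z (w² - k m_z) = A (2m_z - k m_zz)`, both sides of which equal `UsA_z`.
-/

section Miura

variable {R A : Type*} [CommRing R] [CommRing A] [Algebra R A]

/-- The quantity `u³(u - u_zz)`, for which the RmKdV equation reads `u_τ = (rmkdvFlux u)_z`. -/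
def rmkdvFlux (D : Derivation R A A) (u : A) : A := u ^ 3 * (u - D (D u))

/-- The factor `u + k u_z` of the Miura transformation, which is also the Jacobian `y_z` of the
reciprocal transformation. -/
def miuraFactor (D : Derivation R A A) (k u : A) : A := u + k * D u

/-- The Miura transform `u(u + k u_z)` of `u`. -/
def miura (D : Derivation R A A) (k u : A) : A := u * miuraFactor D k u

variable (D : Derivation R A A) {k : A} (u : A)

theorem deriv_rmkdvFlux :
    D (rmkdvFlux D u) = 3 * u ^ 2 * D u * (u - D (D u)) + u ^ 3 * D (u - D (D u)) := by
  simp only [rmkdvFlux, Derivation.leibniz, Derivation.leibniz_pow, smul_eq_mul, nsmul_eq_mul]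
  push_cast
  ring

theorem deriv_miura :
    D (miura D k u) = u * D (miuraFactor D k u) + miuraFactor D k u * D u := by
  simp only [miura, Derivation.leibniz, smul_eq_mul]

theorem mul_deriv_eq_miuraFactor_sub : k * D u = miuraFactor D k u - u :=
  (add_sub_cancel_left u (k * D u)).symm

theorem mul_deriv_miuraFactor (hk : k ^ 2 = 1) (hDk : D k = 0) :
    k * D (miuraFactor D k u) = miuraFactor D k u - (u - D (D u)) := by
  simp only [miuraFactor, map_add, Derivation.leibniz, hDk, smul_eq_mul]
  linear_combination D (D u) * hk

theorem mul_deriv_miura (hk : k ^ 2 = 1) (hDk : D k = 0) :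
    k * D (miura D k u) = miuraFactor D k u ^ 2 - u * (u - D (D u)) := by
  rw [deriv_miura]
  linear_combination u * mul_deriv_miuraFactor D u hk hDk
    + miuraFactor D k u * mul_deriv_eq_miuraFactor_sub D u (k := k)

theorem mul_deriv_deriv_miura (hk : k ^ 2 = 1) (hDk : D k = 0) :
    k * D (D (miura D k u)) = 2 * miuraFactor D k u * D (miuraFactor D k u)
      - (D u * (u - D (D u)) + u * D (u - D (D u))) := by
  have h := congrArg D (mul_deriv_miura D u hk hDk)
  rw [map_sub, D.leibniz, D.leibniz, D.leibniz_pow, hDk] at h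
  simp only [smul_eq_mul, nsmul_eq_mul, pow_one, Nat.add_one_sub_one] at h
  push_cast at h
  linear_combination h

theorem deriv_rmkdvFlux_mul_sub (hk : k ^ 2 = 1) (hDk : D k = 0) :
    D (rmkdvFlux D u) * (miuraFactor D k u ^ 2 - k * D (miura D k u))
      = rmkdvFlux D u * (2 * D (miura D k u) - k * D (D (miura D k u))) := by
  have hu := mul_deriv_eq_miuraFactor_sub D u (k := k)
  have hw := mul_deriv_miuraFactor D u hk hDk
  rw [mul_deriv_deriv_miura D u hk hDk, mul_deriv_miura D u hk hDk, deriv_miura, deriv_rmkdvFlux,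
    rmkdvFlux]
  linear_combination 2 * u ^ 3 * (u - D (D u)) * (D u * hw - D (miuraFactor D k u) * hu)

/-- By `IsReciprocalPullback.pow_three_mul_deriv_deriv`, the left-hand side is the pullback of
`M³(1 - M_yy)`. -/
theorem rkdvFlux_miura (hk : k ^ 2 = 1) (hDk : D k = 0) :
    u ^ 3 * (miuraFactor D k u ^ 3
        - (miuraFactor D k u * D (D (miura D k u)) - D (miuraFactor D k u) * D (miura D k u)))
      = miura D k u * rmkdvFlux D u
        + k * (miura D k u * D (rmkdvFlux D u) - rmkdvFlux D u * D (miura D k u)) := by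
  have hu := mul_deriv_eq_miuraFactor_sub D u (k := k)
  have hw := mul_deriv_miuraFactor D u hk hDk
  have hm := mul_deriv_miura D u hk hDk
  have hm' := mul_deriv_deriv_miura D u hk hDk
  have hmw : miura D k u = u * miuraFactor D k u := rfl
  have ha : rmkdvFlux D u = u ^ 3 * (u - D (D u)) := rfl
  have ha' := deriv_rmkdvFlux D u
  set w := miuraFactor D k u
  set m := miura D k u
  set a := rmkdvFlux D u
  set s := u - D (D u)
  have hpoly : w ^ 3 - (w * D (D m) - D w * D m)
      = 2 * w ^ 2 * s - 2 * u * w * s + u * s ^ 2 + k * u * w * D s := by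
    linear_combination (w * D (D m) - D w * D m) * hk - w * k * hm'
      + (k * D m - 2 * w ^ 2) * hw + (w - s) * hm + w * s * hu
  linear_combination u ^ 3 * (hpoly + s * hm - 3 * w * s * hu)
    - (a + k * D a) * hmw - (u * w - k * D m) * ha - k * (u * w) * ha'

end Miura

section Reciprocal

variable {R A B : Type*} [CommRing R] [CommRing A] [CommRing B] [Algebra R A] [Algebra R B]

/-- The chain rule for a change of variables `(z, τ) ↦ (y(z, τ), τ)`: the ring homomorphism `φ`
stands for the pullback `F ↦ F(y(z, τ), τ)` from functions of `(y, T)`, with derivations `Dy` and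
`DT`, to functions of `(z, τ)`, with derivations `Dz` and `Dτ`. -/
structure IsReciprocalPullback (Dy DT : Derivation R A A) (Dz Dτ : Derivation R B B)
    (φ : A →+* B) (y : B) : Prop where
  deriv_fst (F : A) : Dz (φ F) = φ (Dy F) * Dz y
  deriv_snd (F : A) : Dτ (φ F) = φ (Dy F) * Dτ y + φ (DT F)

namespace IsReciprocalPullback

variable {Dy DT : Derivation R A A} {Dz Dτ : Derivation R B B} {φ : A →+* B} {y : B}

theorem mul_conservationLaw (h : IsReciprocalPullback Dy DT Dz Dτ φ y) (F G : A) :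
    Dz y * φ (DT F + Dy G) = Dz y * Dτ (φ F) - Dτ y * Dz (φ F) + Dz (φ G) := by
  rw [h.deriv_fst, h.deriv_fst, h.deriv_snd, map_add]
  ring

theorem pow_three_mul_deriv_deriv (h : IsReciprocalPullback Dy DT Dz Dτ φ y) (F : A) :
    Dz y ^ 3 * φ (Dy (Dy F)) = Dz y * Dz (Dz (φ F)) - Dz (Dz y) * Dz (φ F) := by
  rw [h.deriv_fst F, Dz.leibniz, h.deriv_fst (Dy F), smul_eq_mul, smul_eq_mul]
  ring

theorem map_rkdvFlux (h : IsReciprocalPullback Dy DT Dz Dτ φ y) {k u : B} {M : A}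
    (hk : k ^ 2 = 1) (hDk : Dz k = 0) (hy : Dz y = miuraFactor Dz k u)
    (hM : φ M = miura Dz k u) :
    φ (M ^ 3 * (Dy (Dy M) - 1))
      = -(miura Dz k u * rmkdvFlux Dz u
        + k * (miura Dz k u * Dz (rmkdvFlux Dz u) - rmkdvFlux Dz u * Dz (miura Dz k u))) := by
  have hMyy := h.pow_three_mul_deriv_deriv M
  rw [hy, hM] at hMyy
  rw [← rkdvFlux_miura Dz u hk hDk, ← hMyy, map_mul, map_pow, map_sub, map_one, hM, miura]
  ring

theorem mul_rkdv_eq_zero (h : IsReciprocalPullback Dy DT Dz Dτ φ y) {k u : B} {M : A}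
    (hk : k ^ 2 = 1) (hDk : Dz k = 0) (hcomm : Dτ (Dz y) = Dz (Dτ y))
    (hu : Dτ u = Dz (rmkdvFlux Dz u)) (hyz : Dz y = miuraFactor Dz k u)
    (hyτ : Dτ y = rmkdvFlux Dz u + k * Dz (rmkdvFlux Dz u)) (hM : φ M = miura Dz k u) :
    Dz y * φ (DT M + Dy (M ^ 3 * (Dy (Dy M) - 1))) = 0 := by
  have hwτ : Dτ (miuraFactor Dz k u)
      = Dz (rmkdvFlux Dz u) + k * Dz (Dz (rmkdvFlux Dz u)) := by
    rw [← hyz, hcomm, hyτ, map_add, Dz.leibniz, hDk, smul_zero, add_zero, smul_eq_mul]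
  have hmτ : Dτ (miura Dz k u) = u * (Dz (rmkdvFlux Dz u) + k * Dz (Dz (rmkdvFlux Dz u)))
      + miuraFactor Dz k u * Dz (rmkdvFlux Dz u) := by
    rw [miura, Dτ.leibniz, hwτ, hu, smul_eq_mul, smul_eq_mul]
  have hflux : Dz (φ (M ^ 3 * (Dy (Dy M) - 1)))
      = -(miura Dz k u * Dz (rmkdvFlux Dz u) + rmkdvFlux Dz u * Dz (miura Dz k u)
        + k * (miura Dz k u * Dz (Dz (rmkdvFlux Dz u))
          - rmkdvFlux Dz u * Dz (Dz (miura Dz k u)))) := by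
    rw [h.map_rkdvFlux hk hDk hyz hM]
    simp only [map_neg, map_add, map_sub, Derivation.leibniz, hDk, smul_eq_mul]
    ring
  have hmw : miura Dz k u = u * miuraFactor Dz k u := rfl
  rw [h.mul_conservationLaw, hflux, hM, hmτ, hyτ, hyz]
  linear_combination deriv_rmkdvFlux_mul_sub Dz u hk hDk
    - (Dz (rmkdvFlux Dz u) + k * Dz (Dz (rmkdvFlux Dz u))) * hmw

end IsReciprocalPullback

end Reciprocal

namespace Smooth2

variable {f g : ℝ → ℝ → ℝ}

theorem const (c : ℝ) : Smooth2 fun _ _ => c := contDiff_const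

theorem add (hf : Smooth2 f) (hg : Smooth2 g) : Smooth2 (f + g) := ContDiff.add hf hg

theorem mul (hf : Smooth2 f) (hg : Smooth2 g) : Smooth2 (f * g) := ContDiff.mul hf hg

theorem comp_fst (hf : Smooth2 f) (hg : Smooth2 g) : Smooth2 fun a b => f (g a b) b :=
  ContDiff.comp hf (ContDiff.prodMk hg contDiff_snd)

theorem differentiable (hf : Smooth2 f) : Differentiable ℝ fun p : ℝ × ℝ => f p.1 p.2 :=
  ContDiff.differentiable hf (by simp)

theorem contDiff_fderiv (hf : Smooth2 f) :
    ContDiff ℝ (⊤ : ℕ∞) (fderiv ℝ fun p : ℝ × ℝ => f p.1 p.2) :=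
  ContDiff.fderiv_right hf (by simp)

theorem hasDerivAt_comp_fderiv (hf : Smooth2 f) {p q : ℝ → ℝ} {p' q' t : ℝ}
    (hp : HasDerivAt p p' t) (hq : HasDerivAt q q' t) :
    HasDerivAt (fun s => f (p s) (q s))
      (fderiv ℝ (fun x : ℝ × ℝ => f x.1 x.2) (p t, q t) (p', q')) t :=
  (hf.differentiable (p t, q t)).hasFDerivAt.comp_hasDerivAt (f := fun s => (p s, q s)) t
    (hp.prodMk hq)

theorem d1_eq_fderiv (hf : Smooth2 f) (a b : ℝ) :
    d1 f a b = fderiv ℝ (fun p : ℝ × ℝ => f p.1 p.2) (a, b) (1, 0) :=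
  (hf.hasDerivAt_comp_fderiv (hasDerivAt_id a) (hasDerivAt_const a b)).deriv

theorem d2_eq_fderiv (hf : Smooth2 f) (a b : ℝ) :
    d2 f a b = fderiv ℝ (fun p : ℝ × ℝ => f p.1 p.2) (a, b) (0, 1) :=
  (hf.hasDerivAt_comp_fderiv (hasDerivAt_const b a) (hasDerivAt_id b)).deriv

theorem hasDerivAt_comp (hf : Smooth2 f) {p q : ℝ → ℝ} {p' q' t : ℝ}
    (hp : HasDerivAt p p' t) (hq : HasDerivAt q q' t) :
    HasDerivAt (fun s => f (p s) (q s)) (d1 f (p t) (q t) * p' + d2 f (p t) (q t) * q') t := by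
  have hdir : ((p', q') : ℝ × ℝ) = p' • (1, 0) + q' • (0, 1) := by simp
  convert hf.hasDerivAt_comp_fderiv hp hq using 1
  rw [hdir, map_add, map_smul, map_smul, ← hf.d1_eq_fderiv, ← hf.d2_eq_fderiv, smul_eq_mul,
    smul_eq_mul, mul_comm p', mul_comm q']

theorem hasDerivAt_fst (hf : Smooth2 f) (a b : ℝ) : HasDerivAt (fun s => f s b) (d1 f a b) a := by
  simpa using hf.hasDerivAt_comp (hasDerivAt_id a) (hasDerivAt_const a b)

theorem hasDerivAt_snd (hf : Smooth2 f) (a b : ℝ) : HasDerivAt (fun s => f a s) (d2 f a b) b := by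
  simpa using hf.hasDerivAt_comp (hasDerivAt_const b a) (hasDerivAt_id b)

theorem smooth2_d1 (hf : Smooth2 f) : Smooth2 (d1 f) := by
  simpa only [Smooth2, hf.d1_eq_fderiv] using hf.contDiff_fderiv.clm_apply contDiff_const

theorem smooth2_d2 (hf : Smooth2 f) : Smooth2 (d2 f) := by
  simpa only [Smooth2, hf.d2_eq_fderiv] using hf.contDiff_fderiv.clm_apply contDiff_const

theorem d2_d1_eq_d1_d2 (hf : Smooth2 f) : d2 (d1 f) = d1 (d2 f) := by
  funext a b
  have hdiff : DifferentiableAt ℝ (fderiv ℝ fun p : ℝ × ℝ => f p.1 p.2) (a, b) :=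
    hf.contDiff_fderiv.differentiable (by simp) _
  have hsymm : IsSymmSndFDerivAt ℝ (fun p : ℝ × ℝ => f p.1 p.2) (a, b) :=
    (ContDiff.contDiffAt hf).isSymmSndFDerivAt
      (by simpa using WithTop.coe_le_coe.2 (le_top : (2 : ℕ∞) ≤ ⊤))
  rw [hf.smooth2_d1.d2_eq_fderiv, hf.smooth2_d2.d1_eq_fderiv]
  simp only [hf.d1_eq_fderiv, hf.d2_eq_fderiv]
  rw [fderiv_clm_apply hdiff (differentiableAt_const _),
    fderiv_clm_apply hdiff (differentiableAt_const _)]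
  simpa using hsymm.eq (0, 1) (1, 0)

end Smooth2

/-- The algebra `C^∞(ℝ²)` of smooth functions, in curried form. -/
def smoothAlgebra : Subalgebra ℝ (ℝ → ℝ → ℝ) where
  carrier := {f | Smooth2 f}
  mul_mem' := Smooth2.mul
  add_mem' := Smooth2.add
  algebraMap_mem' := Smooth2.const

namespace smoothAlgebra

/-- The partial derivative `d1` as a derivation of `C^∞(ℝ²)`. -/
def deriv1 : Derivation ℝ smoothAlgebra smoothAlgebra :=
  Derivation.mk'
    { toFun f := ⟨d1 f, f.2.smooth2_d1⟩
      map_add' f g := Subtype.ext <| funext₂ fun a b =>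
        ((f.2.hasDerivAt_fst a b).add (g.2.hasDerivAt_fst a b)).deriv
      map_smul' c f := Subtype.ext <| funext₂ fun a b =>
        ((f.2.hasDerivAt_fst a b).const_smul c).deriv }
    fun f g => Subtype.ext <| funext₂ fun a b =>
      ((f.2.hasDerivAt_fst a b).mul (g.2.hasDerivAt_fst a b)).deriv.trans <| by
        simp [add_comm, mul_comm]

/-- The partial derivative `d2` as a derivation of `C^∞(ℝ²)`. -/
def deriv2 : Derivation ℝ smoothAlgebra smoothAlgebra :=
  Derivation.mk'
    { toFun f := ⟨d2 f, f.2.smooth2_d2⟩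
      map_add' f g := Subtype.ext <| funext₂ fun a b =>
        ((f.2.hasDerivAt_snd a b).add (g.2.hasDerivAt_snd a b)).deriv
      map_smul' c f := Subtype.ext <| funext₂ fun a b =>
        ((f.2.hasDerivAt_snd a b).const_smul c).deriv }
    fun f g => Subtype.ext <| funext₂ fun a b =>
      ((f.2.hasDerivAt_snd a b).mul (g.2.hasDerivAt_snd a b)).deriv.trans <| by
        simp [add_comm, mul_comm]

theorem deriv2_deriv1 (f : smoothAlgebra) : deriv2 (deriv1 f) = deriv1 (deriv2 f) :=
  Subtype.ext f.2.d2_d1_eq_d1_d2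

/-- Pullback `F ↦ F(y(z, τ), τ)` along the change of variables `(z, τ) ↦ (y(z, τ), τ)`. -/
def pullback (y : smoothAlgebra) : smoothAlgebra →+* smoothAlgebra where
  toFun F := ⟨fun z τ => F.1 (y.1 z τ) τ, F.2.comp_fst y.2⟩
  map_one' := rfl
  map_mul' _ _ := rfl
  map_zero' := rfl
  map_add' _ _ := rfl

theorem isReciprocalPullback_pullback (y : smoothAlgebra) :
    IsReciprocalPullback deriv1 deriv2 deriv1 deriv2 (pullback y) y where
  deriv_fst F := Subtype.ext <| funext₂ fun z τ =>
    (F.2.hasDerivAt_comp (y.2.hasDerivAt_fst z τ) (hasDerivAt_const z τ)).deriv.trans <| by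
      rw [mul_zero, add_zero]; rfl
  deriv_snd F := Subtype.ext <| funext₂ fun z τ =>
    (F.2.hasDerivAt_comp (y.2.hasDerivAt_snd z τ) (hasDerivAt_id τ)).deriv.trans <| by
      rw [mul_one]; rfl

end smoothAlgebra

open smoothAlgebra in
theorem miura_reciprocal_RmKdV_to_RKdV_general (U y M : ℝ → ℝ → ℝ) (k : ℝ)
    (hU : Smooth2 U) (hy : Smooth2 y) (hM : Smooth2 M) (hk : k ^ 2 = 1)
    (hRmKdV : ∀ z τ, d2 U z τ
      + d1 (fun z τ => (U z τ) ^ 3 * (d1 (d1 U) z τ - U z τ)) z τ = 0)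
    (hyz : ∀ z τ, d1 y z τ = U z τ + k * d1 U z τ)
    (hyτ : ∀ z τ, d2 y z τ =
      ((U z τ) ^ 4 - (U z τ) ^ 3 * d1 (d1 U) z τ)
        + k * d1 (fun a b => (U a b) ^ 4 - (U a b) ^ 3 * d1 (d1 U) a b) z τ)
    (hMU : ∀ z τ, M (y z τ) τ = U z τ * (U z τ + k * d1 U z τ))
    {z τ : ℝ} (hne : U z τ + k * d1 U z τ ≠ 0) :
    d2 M (y z τ) τ
      + d1 (fun a b => (M a b) ^ 3 * (d1 (d1 M) a b - 1)) (y z τ) τ = 0 := by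
  let u : smoothAlgebra := ⟨U, hU⟩
  let Y : smoothAlgebra := ⟨y, hy⟩
  let m : smoothAlgebra := ⟨M, hM⟩
  let κ : smoothAlgebra := algebraMap ℝ smoothAlgebra k
  have hκ : κ ^ 2 = 1 := by rw [← map_pow, hk, map_one]
  have hflux : rmkdvFlux deriv1 u = u ^ 4 - u ^ 3 * deriv1 (deriv1 u) := by rw [rmkdvFlux]; ring
  have hu : deriv2 u = deriv1 (rmkdvFlux deriv1 u) := by
    have hneg : u ^ 3 * (deriv1 (deriv1 u) - u) = -rmkdvFlux deriv1 u := by rw [rmkdvFlux]; ring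
    have h : deriv2 u + deriv1 (u ^ 3 * (deriv1 (deriv1 u) - u)) = 0 :=
      Subtype.ext (funext₂ hRmKdV)
    rwa [hneg, map_neg, add_neg_eq_zero] at h
  have hYτ : deriv2 Y = rmkdvFlux deriv1 u + κ * deriv1 (rmkdvFlux deriv1 u) := by
    rw [hflux]
    exact Subtype.ext (funext₂ hyτ)
  have h := (isReciprocalPullback_pullback Y).mul_rkdv_eq_zero (M := m) hκ
    (deriv1.map_algebraMap k) (deriv2_deriv1 Y) hu (Subtype.ext (funext₂ hyz)) hYτ
    (Subtype.ext (funext₂ hMU))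
  have hzτ := congrFun₂ (congrArg Subtype.val h) z τ
  exact (mul_eq_zero.mp hzτ).resolve_left ((hyz z τ).trans_ne hne)

/-- Theorem 1 of the paper: the Miura-reciprocal transformation
`M = U(U + kU_z)`, `dy = (U + kU_z)dz + [(U⁴ − U³U_zz) + k(U⁴ − U³U_zz)_z]dτ`, `T = τ`
maps a solution `U` of RmKdV to a solution `M` of RKdV. -/
theorem miura_reciprocal_RmKdV_to_RKdV (U y M : ℝ → ℝ → ℝ) (k : ℝ)
    (hU : Smooth2 U) (hy : Smooth2 y) (hM : Smooth2 M)
    (hk : k = 1 ∨ k = -1)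
    (hUne : ∀ z τ, U z τ ≠ 0)
    (hUkne : ∀ z τ, U z τ + k * d1 U z τ ≠ 0)
    (hRmKdV : ∀ z τ, d2 U z τ
      + d1 (fun z τ => (U z τ) ^ 3 * (d1 (d1 U) z τ - U z τ)) z τ = 0)
    (hyz : ∀ z τ, d1 y z τ = U z τ + k * d1 U z τ)
    (hyτ : ∀ z τ, d2 y z τ =
      ((U z τ) ^ 4 - (U z τ) ^ 3 * d1 (d1 U) z τ)
        + k * d1 (fun a b => (U a b) ^ 4 - (U a b) ^ 3 * d1 (d1 U) a b) z τ)
    (hMU : ∀ z τ, M (y z τ) τ = U z τ * (U z τ + k * d1 U z τ)) :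
    ∀ z τ,
      d2 M (y z τ) τ
        + d1 (fun a b => (M a b) ^ 3 * (d1 (d1 M) a b - 1)) (y z τ) τ = 0 :=
  fun z τ => miura_reciprocal_RmKdV_to_RKdV_general U y M k hU hy hM (sq_eq_one_iff.mpr hk)
    hRmKdV hyz hyτ hMU (hUkne z τ)
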